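/- (Necessary step-size condition for accuracy, from the proof of Theorem 5) Let f(x) = (m/2)·Σ_{i=1}^d x_i² + (L/2)·Σ_{i=d+1}^{2d} x_i² on ℝ^{2d} with m = 1 and L ≥ 4, and let μ be the probability measure on ℝ^{2d} with density proportional to exp(−f). Run LMC from x₀ = (1,1,…,1) ∈ ℝ^{2d} with step size h, 0 < h < 2/L. If for some k ≥ 1 and some ε > 0 one has W₂(Law(x̄_k), μ) ≤ ε, then the step size must satisfy h ≤ 4ε/√d. -/

import Mathlib

open MeasureTheory ProbabilityTheory Real
open scoped ENNReal NNReal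

noncomputable section

/-- `ℝ^d` with the Euclidean structure. -/
abbrev Euc (d : ℕ) := EuclideanSpace ℝ (Fin d)

/-- The standard Gaussian measure `N(0, I_d)` on `ℝ^d`. -/
noncomputable def stdGaussian (d : ℕ) : Measure (Euc d) :=
  (Measure.pi fun _ : Fin d => gaussianReal 0 1).map (EuclideanSpace.equiv (Fin d) ℝ).symm

/-- The centered Gaussian measure on `ℝ^d` with covariance `σ2 • I_d`. -/
noncomputable def isoGaussian (d : ℕ) (σ2 : ℝ) : Measure (Euc d) :=
  (stdGaussian d).map fun x => Real.sqrt σ2 • x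

/-- `B` is a standard `d`-dimensional Brownian motion with respect to the filtration `ℱ`
under the probability measure `P`. -/
structure IsStdBrownian {d : ℕ} {Ω : Type*} {mΩ : MeasurableSpace Ω} (P : Measure Ω)
    (ℱ : Filtration ℝ mΩ) (B : ℝ → Ω → Euc d) : Prop where
  init : ∀ ω, B 0 ω = 0
  cont : ∀ ω, Continuous fun t => B t ω
  adapted : StronglyAdapted ℱ B
  incr_law : ∀ s t : ℝ, 0 ≤ s → s ≤ t →
    P.map (fun ω => B t ω - B s ω) = isoGaussian d (t - s)
  incr_indep : ∀ s t : ℝ, 0 ≤ s → s ≤ t →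
    Indep (MeasurableSpace.comap (fun ω => B t ω - B s ω) inferInstance) (ℱ s) P

/-- `X` is a (pathwise) solution of the overdamped Langevin dynamics
`dX_t = -∇f(X_t) dt + √2 dB_t`: a continuous adapted process satisfying the integral
equation `X_t = X_0 - ∫₀ᵗ ∇f(X_s) ds + √2 B_t` for all `t ≥ 0`. -/
structure IsLangevinSolution {d : ℕ} {Ω : Type*} {mΩ : MeasurableSpace Ω}
    (ℱ : Filtration ℝ mΩ) (f : Euc d → ℝ) (B : ℝ → Ω → Euc d) (X : ℝ → Ω → Euc d) : Prop where
  cont : ∀ ω, Continuous fun t => X t ω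
  adapted : StronglyAdapted ℱ X
  eqn : ∀ ω, ∀ t : ℝ, 0 ≤ t →
    X t ω = X 0 ω - (∫ s in (0:ℝ)..t, gradient f (X s ω)) + Real.sqrt 2 • B t ω

/-- The Hessian bounds `m • I ≼ ∇²f(x) ≼ L • I` for all `x`, expressed through the second
iterated Fréchet derivative: `m ‖v‖² ≤ ⟨v, ∇²f(x) v⟩ ≤ L ‖v‖²`. -/
def HessianBounds {d : ℕ} (m L : ℝ) (f : Euc d → ℝ) : Prop :=
  ∀ x v : Euc d, m * ‖v‖ ^ 2 ≤ iteratedFDeriv ℝ 2 f x ![v, v] ∧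
    iteratedFDeriv ℝ 2 f x ![v, v] ≤ L * ‖v‖ ^ 2


/-- The 2-Wasserstein distance:
`W₂(μ, ν) = inf over couplings γ of (∫ ‖x - y‖² dγ)^{1/2}`, where a coupling of `μ` and `ν`
is a probability measure on the product space whose marginals are `μ` and `ν`. -/
noncomputable def W2 {α : Type*} [MeasurableSpace α] [NormedAddCommGroup α]
    (μ ν : Measure α) : ℝ :=
  Real.sqrt (ENNReal.toReal
    (⨅ γ ∈ {γ : Measure (α × α) |
        IsProbabilityMeasure γ ∧ γ.map Prod.fst = μ ∧ γ.map Prod.snd = ν},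
      ∫⁻ p, (‖p.1 - p.2‖₊ : ℝ≥0∞) ^ 2 ∂γ))

/-- `μ` is the probability measure with density proportional to `exp (-f)` with respect to
Lebesgue measure. -/
def IsGibbs {d : ℕ} (f : Euc d → ℝ) (μ : Measure (Euc d)) : Prop :=
  IsProbabilityMeasure μ ∧ ∃ c : ℝ≥0∞, c ≠ 0 ∧ c ≠ ⊤ ∧
    μ = c • (volume : Measure (Euc d)).withDensity fun x => ENNReal.ofReal (Real.exp (-f x))


/-- The quadratic potential `f(x) = (m/2) Σ_{i<d} x_i² + (L/2) Σ_{d ≤ i < 2d} x_i²` on `ℝ^{2d}`. -/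
noncomputable def fquad (d : ℕ) (m L : ℝ) : Euc (2 * d) → ℝ :=
  fun x => ∑ i : Fin (2 * d), ((if (i : ℕ) < d then m else L) / 2) * x i ^ 2

lemma pi_gauss_density {n : ℕ} (v : Fin n → ℝ≥0) (hv : ∀ i, v i ≠ 0) :
    (Measure.pi fun i => gaussianReal 0 (v i)) =
      (volume : Measure (Fin n → ℝ)).withDensity
        (fun x => ENNReal.ofReal (∏ i, gaussianPDFReal 0 (v i) (x i))) := by
  refine Measure.pi_eq ?_
  intro s hs
  rw [withDensity_apply _ (MeasurableSet.univ_pi hs)]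
  rw [← ofReal_integral_eq_lintegral_ofReal]
  · rw [volume_pi, Measure.restrict_pi_pi, integral_fintype_prod_eq_prod,
      ENNReal.ofReal_prod_of_nonneg]
    · refine Finset.prod_congr rfl fun i _ => ?_
      rw [gaussianReal_apply_eq_integral _ (hv i)]
    · intro i _
      exact integral_nonneg fun x => gaussianPDFReal_nonneg _ _ _
  · exact (Integrable.fintype_prod (f := fun i => gaussianPDFReal 0 (v i))
      fun i => integrable_gaussianPDFReal _ _).integrableOn
  · exact Filter.Eventually.of_forall fun x =>
      Finset.prod_nonneg fun i _ => gaussianPDFReal_nonneg _ _ _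

lemma gibbs_marg {d : ℕ} {L : ℝ} (hL : 4 ≤ L) {μ : Measure (Euc (2 * d))}
    (hμ : IsGibbs (fquad d 1 L) μ) (i : Fin (2 * d)) :
    μ.map (fun x => x i) =
      gaussianReal 0 (Real.toNNReal (1 / (if (i : ℕ) < d then 1 else L))) := by
  obtain ⟨hp, c, hc0, hct, hμe⟩ := hμ
  set lam : Fin (2 * d) → ℝ := fun i => if (i : ℕ) < d then 1 else L with hlam
  have hlp : ∀ i, 0 < lam i := by
    intro i; simp only [hlam]; split_ifs <;> linarith
  set v : Fin (2 * d) → ℝ≥0 := fun i => Real.toNNReal (1 / lam i) with hvdef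
  have hvc : ∀ i, ((v i : ℝ≥0) : ℝ) = 1 / lam i := fun i =>
    Real.coe_toNNReal _ (by have := hlp i; positivity)
  have hv : ∀ i, v i ≠ 0 := by
    intro i h0
    have := hvc i
    rw [h0] at this
    have h2 := hlp i
    have : 0 < 1 / lam i := by positivity
    simp_all
  set K : ℝ := ∏ i, Real.sqrt (2 * π * v i) with hK
  have hKp : 0 < K := by
    refine Finset.prod_pos fun i _ => Real.sqrt_pos.2 ?_
    have := hlp i
    rw [hvc]; positivity
  have hdens : ∀ x : Fin (2 * d) → ℝ, Real.exp (-(fquad d 1 L (WithLp.toLp 2 x))) =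
      K * ∏ i, gaussianPDFReal 0 (v i) (x i) := by
    intro x
    rw [hK, ← Finset.prod_mul_distrib]
    unfold fquad
    rw [← Finset.sum_neg_distrib, Real.exp_sum]
    refine Finset.prod_congr rfl fun j _ => ?_
    rw [gaussianPDFReal_def]
    have hs : Real.sqrt (2 * π * v j) ≠ 0 := by
      refine (Real.sqrt_pos.2 ?_).ne'
      have := hlp j
      rw [hvc]; positivity
    have h1 := (hlp j).ne'
    simp only
    rw [← mul_assoc, mul_inv_cancel₀ hs, one_mul, hvc]
    congr 1
    change -(lam j / 2 * x j ^ 2) = _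
    field_simp
    ring
  -- transfer
  have hme : Measurable (fun x : Fin (2 * d) → ℝ => (WithLp.toLp 2 x : Euc (2 * d))) := by
    fun_prop
  have hme' : Measurable (fun x : Euc (2 * d) => (WithLp.ofLp x : Fin (2 * d) → ℝ)) := by
    fun_prop
  have hmap : μ.map (fun x : Euc (2 * d) => (WithLp.ofLp x : Fin (2 * d) → ℝ)) =
      (c * ENNReal.ofReal K) • (Measure.pi fun i => gaussianReal 0 (v i)) := by
    rw [pi_gauss_density v hv, hμe, Measure.map_smul, mul_smul]
    congr 1
    ext s hs
    rw [Measure.map_apply hme' hs, withDensity_apply _ (hme' hs), Measure.smul_apply,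
      withDensity_apply _ hs, smul_eq_mul, ← lintegral_const_mul']
    · rw [← (PiLp.volume_preserving_toLp (Fin (2 * d))).setLIntegral_comp_preimage_emb
        (MeasurableEquiv.toLp 2 (Fin (2 * d) → ℝ)).measurableEmbedding]
      refine lintegral_congr fun x => ?_
      rw [hdens, ENNReal.ofReal_mul hKp.le]
    · exact ENNReal.ofReal_ne_top
  have hone : c * ENNReal.ofReal K = 1 := by
    have := congrArg (fun m => m Set.univ) hmap
    simp only [Measure.map_apply hme' MeasurableSet.univ, Measure.smul_apply] at this
    simpa using this.symm
  rw [hone, one_smul] at hmap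
  have : μ.map (fun x => x i) =
      (μ.map (fun x : Euc (2 * d) => (WithLp.ofLp x : Fin (2 * d) → ℝ))).map (Function.eval i) := by
    rw [Measure.map_map (measurable_pi_apply i) hme']
    rfl
  rw [this, hmap, (measurePreserving_eval _ i).map_eq]

lemma std_marg (n : ℕ) (i : Fin n) :
    (_root_.stdGaussian n).map (fun x => x i) = gaussianReal 0 1 := by
  unfold _root_.stdGaussian
  rw [Measure.map_map (by fun_prop) (by fun_prop)]
  exact (measurePreserving_eval (fun _ : Fin n => gaussianReal 0 1) i).map_eq

lemma grad_fquad {d : ℕ} (L : ℝ) (x : Euc (2 * d)) (i : Fin (2 * d)) :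
    gradient (fquad d 1 L) x i = (if (i : ℕ) < d then 1 else L) * x i := by
  have : HasGradientAt (fquad d 1 L)
      (WithLp.toLp 2 fun i : Fin (2 * d) => (if (i : ℕ) < d then 1 else L) * x i) x := by
    rw [hasGradientAt_iff_hasFDerivAt]
    unfold fquad
    have h1 : ∀ j : Fin (2 * d), HasFDerivAt
        (fun x : Euc (2 * d) => ((if (j : ℕ) < d then 1 else L) / 2) * x j ^ 2)
        (((if (j : ℕ) < d then 1 else L) * x j) • (EuclideanSpace.proj j : Euc (2 * d) →L[ℝ] ℝ)) x := by
      intro j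
      have h2 : HasFDerivAt (fun x : Euc (2 * d) => x j)
        (EuclideanSpace.proj j : Euc (2 * d) →L[ℝ] ℝ) x :=
        (EuclideanSpace.proj j : Euc (2 * d) →L[ℝ] ℝ).hasFDerivAt
      refine ((h2.pow 2).const_mul ((if (j : ℕ) < d then 1 else L) / 2)).congr_fderiv ?_
      ext y
      split_ifs <;> simp <;> ring
    refine (HasFDerivAt.fun_sum (u := Finset.univ) (fun j _ => h1 j)).congr_fderiv ?_
    ext y
    rw [_root_.sum_apply, InnerProductSpace.toDual_apply_apply, PiLp.inner_apply]
    refine Finset.sum_congr rfl fun j _ => ?_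
    rw [_root_.smul_apply]
    change _ * x j * y j = _
    simp only [RCLike.inner_apply, conj_trivial]
    ring
  rw [this.gradient]

lemma gauss_mom {Ω : Type*} {mΩ : MeasurableSpace Ω} {P : Measure Ω} {X : Ω → ℝ}
    (hX : AEMeasurable X P) {v : ℝ≥0} (hl : P.map X = gaussianReal 0 v) :
    MemLp X 2 P ∧ ∫ ω, X ω ∂P = 0 ∧ ∫ ω, X ω ^ 2 ∂P = v := by
  refine ⟨?_, ?_, ?_⟩
  · have := memLp_id_gaussianReal' (μ := 0) (v := v) 2 (by simp)
    rw [← hl, memLp_map_measure_iff (by fun_prop) hX] at this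
    exact this
  · rw [← integral_map (f := fun x => x) hX (by fun_prop), hl, integral_id_gaussianReal]
  · rw [← integral_map (f := fun x => x ^ 2) hX (by fun_prop), hl]
    have := variance_fun_id_gaussianReal (μ := 0) (v := v)
    rw [variance_of_integral_eq_zero (by fun_prop) integral_id_gaussianReal] at this
    exact this

lemma scalar_mom {Ω : Type*} {mΩ : MeasurableSpace Ω} {P : Measure Ω} [IsProbabilityMeasure P]
    {x z : ℕ → Ω → ℝ} {c s : ℝ} (hx0 : x 0 = fun _ => 1)
    (hx : ∀ k, x (k + 1) = fun ω => c * x k ω + s * z (k + 1) ω)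
    (hz : ∀ k, MemLp (z k) 2 P) (hz1 : ∀ k, ∫ ω, z k ω ∂P = 0)
    (hz2 : ∀ k, ∫ ω, z k ω ^ 2 ∂P = 1)
    (hzz : ∀ m n, m ≠ n → ∫ ω, z m ω * z n ω ∂P = 0) (k : ℕ) :
    MemLp (x k) 2 P ∧ ∫ ω, x k ω ∂P = c ^ k ∧ (∀ n, k < n → ∫ ω, x k ω * z n ω ∂P = 0) ∧
      (∫ ω, x k ω ^ 2 ∂P - (c ^ k) ^ 2) * (1 - c ^ 2) = s ^ 2 * (1 - (c ^ k) ^ 2) := by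
  induction k with
  | zero =>
    rw [hx0]
    refine ⟨memLp_const _, by simp, ?_, by simp⟩
    intro n _
    simpa using hz1 n
  | succ k ih =>
    obtain ⟨h1, h2, h3, h4⟩ := ih
    have hzk := hz (k + 1)
    rw [hx]
    refine ⟨(h1.const_mul c).add (hzk.const_mul s), ?_, ?_, ?_⟩
    · rw [integral_add ((h1.integrable (by norm_num)).const_mul c)
        ((hzk.integrable (by norm_num)).const_mul s), integral_const_mul, integral_const_mul,
        h2, hz1]
      ring
    · intro n hn
      have e : (fun ω => (c * x k ω + s * z (k + 1) ω) * z n ω) =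
        fun ω => c * (x k ω * z n ω) + s * (z (k + 1) ω * z n ω) := by
        ext ω; ring
      have j1 : Integrable (fun ω => c * (x k ω * z n ω)) P :=
        (h1.integrable_mul (hz n)).const_mul c
      have j2 : Integrable (fun ω => s * (z (k + 1) ω * z n ω)) P :=
        (hzk.integrable_mul (hz n)).const_mul s
      rw [e, integral_add j1 j2, integral_const_mul, integral_const_mul,
        h3 n (by omega), hzz _ _ (by omega)]
      ring
    · have e : (fun ω => (c * x k ω + s * z (k + 1) ω) ^ 2) =
        fun ω => c ^ 2 * (x k ω ^ 2) + 2 * c * s * (x k ω * z (k + 1) ω) +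
          s ^ 2 * (z (k + 1) ω ^ 2) := by
        ext ω; ring
      have i1 := (h1.integrable_sq).const_mul (c ^ 2)
      have i2 : Integrable (fun ω => 2 * c * s * (x k ω * z (k + 1) ω)) P :=
        (h1.integrable_mul hzk).const_mul (2 * c * s)
      have i3 := (hzk.integrable_sq).const_mul (s ^ 2)
      have e2 : ∫ ω, (c * x k ω + s * z (k + 1) ω) ^ 2 ∂P =
          c ^ 2 * ∫ ω, x k ω ^ 2 ∂P + s ^ 2 := by
        rw [e, integral_add (i1.fun_add i2) i3, integral_add i1 i2, integral_const_mul,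
          integral_const_mul, integral_const_mul, h3 _ (by omega), hz2]
        ring
      rw [e2, pow_succ]
      linear_combination c ^ 2 * h4

/-- Lower bound on the one-dimensional transport cost. -/
lemma scalar_lower {α : Type*} {mα : MeasurableSpace α} {γ : Measure α} [IsProbabilityMeasure γ]
    {X Y : α → ℝ} (hX : MemLp X 2 γ) (hY : MemLp Y 2 γ) {h a : ℝ} (hh0 : 0 < h) (hh1 : h ≤ 1 / 2)
    (ha : 0 ≤ a) (hX1 : ∫ p, X p ∂γ = a)
    (hX2 : (∫ p, X p ^ 2 ∂γ - a ^ 2) * (1 - (1 - h) ^ 2) = 2 * h * (1 - a ^ 2))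
    (hY1 : ∫ p, Y p ∂γ = 0) (hY2 : ∫ p, Y p ^ 2 ∂γ = 1) :
    h ^ 2 / 16 ≤ ∫ p, (X p - Y p) ^ 2 ∂γ := by
  have iX := hX.integrable (by norm_num : (1 : ℝ≥0∞) ≤ 2)
  have iY := hY.integrable (by norm_num : (1 : ℝ≥0∞) ≤ 2)
  have iX2 := hX.integrable_sq
  have iY2 := hY.integrable_sq
  have iXY : Integrable (fun p => (X p - Y p) ^ 2) γ := (hX.sub hY).integrable_sq
  have iXmY : Integrable (fun p => X p - Y p) γ := iX.sub iY
  by_cases hc : h / 4 ≤ a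
  · have : ∫ p, (2 * a * (X p - Y p) - a ^ 2) ∂γ ≤ ∫ p, (X p - Y p) ^ 2 ∂γ := by
      refine integral_mono ((iXmY.const_mul _).sub (integrable_const _)) iXY fun p => ?_
      simp only
      nlinarith [sq_nonneg (X p - Y p - a)]
    rw [integral_sub (iXmY.const_mul _) (integrable_const _), integral_const_mul,
      integral_sub iX iY, hX1, hY1] at this
    simp at this
    nlinarith
  · push Not at hc
    set M := ∫ p, X p ^ 2 ∂γ with hM
    have hs : 0 < 1 + h / 4 := by positivity
    have : ∫ p, ((h / 4 / (1 + h / 4)) * X p ^ 2 - h / 4 * Y p ^ 2) ∂γ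
        ≤ ∫ p, (X p - Y p) ^ 2 ∂γ := by
      refine integral_mono ((iX2.const_mul _).sub (iY2.const_mul _)) iXY fun p => ?_
      simp only
      rw [div_mul_eq_mul_div, sub_le_iff_le_add, div_le_iff₀ hs]
      nlinarith [sq_nonneg (X p - (1 + h / 4) * Y p)]
    rw [integral_sub (iX2.const_mul _) (iY2.const_mul _), integral_const_mul,
      integral_const_mul, hY2, ← hM] at this
    refine le_trans ?_ this
    have hV : (M - a ^ 2) * (1 - h / 2) = 1 - a ^ 2 := by
      have : (2 * h) * ((M - a ^ 2) * (1 - h / 2)) = (2 * h) * (1 - a ^ 2) := by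
        linear_combination hX2
      exact mul_left_cancel₀ (by positivity) this
    have hMb : (1 + h / 4) ^ 2 ≤ M := by
      have ha2 : a ^ 2 ≤ h ^ 2 / 16 := by nlinarith
      have hpos : 0 < 1 - h / 2 := by linarith
      have : (1 + h / 4) ^ 2 * (1 - h / 2) ≤ (M - a ^ 2) * (1 - h / 2) := by
        rw [hV]
        nlinarith [pow_pos hh0 3, pow_pos hh0 2]
      have := le_of_mul_le_mul_right this hpos
      nlinarith [sq_nonneg a]
    have : h / 4 / (1 + h / 4) * (1 + h / 4) ^ 2 ≤ h / 4 / (1 + h / 4) * M := by gcongr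
    have e : h / 4 / (1 + h / 4) * (1 + h / 4) ^ 2 = h / 4 * (1 + h / 4) := by
      field_simp
    nlinarith

lemma map_moments {α : Type*} {mα : MeasurableSpace α} {γ : Measure α} {n : ℕ} {g : α → Euc n}
    (hg : Measurable g) {μ : Measure (Euc n)} (he : γ.map g = μ) (i : Fin n)
    (hm : MemLp (fun x : Euc n => x i) 2 μ) :
    MemLp (fun p => g p i) 2 γ ∧ ∫ p, g p i ∂γ = ∫ x, x i ∂μ ∧
      ∫ p, g p i ^ 2 ∂γ = ∫ x, x i ^ 2 ∂μ := by
  subst he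
  refine ⟨?_, ?_, ?_⟩
  · exact (memLp_map_measure_iff (by fun_prop) hg.aemeasurable).1 hm
  · rw [integral_map hg.aemeasurable (by fun_prop)]
  · rw [integral_map hg.aemeasurable (by fun_prop)]

lemma sq_nnnorm_eq {n : ℕ} (x : Euc n) :
    (‖x‖₊ : ℝ≥0∞) ^ 2 = ENNReal.ofReal (∑ i, x i ^ 2) := by
  rw [← enorm_eq_nnnorm, ← ofReal_norm, ← ENNReal.ofReal_pow (norm_nonneg _),
    EuclideanSpace.norm_sq_eq]
  simp

lemma fin_card (d : ℕ) : (Finset.univ.filter fun i : Fin (2 * d) => (i : ℕ) < d).card = d := by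
  rw [Fin.card_filter_val_lt]; omega

theorem lmc_step_size_necessary_condition
    {d : ℕ} (hd : 0 < d)
    {Ω : Type*} {mΩ : MeasurableSpace Ω} {P : Measure Ω} [IsProbabilityMeasure P]
    {L : ℝ} (hL : 4 ≤ L)
    {μ : Measure (Euc (2 * d))} (hμ : IsGibbs (fquad d 1 L) μ)
    {h : ℝ} (hh0 : 0 < h) (hh1 : h < 2 / L)
    {ξ : ℕ → Ω → Euc (2 * d)} (hξmeas : ∀ k, Measurable (ξ k))
    (hξlaw : ∀ k, P.map (ξ k) = stdGaussian (2 * d))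
    (hindep : iIndepFun ξ P)
    {Xb : ℕ → Ω → Euc (2 * d)} (hXb0 : Xb 0 = fun _ => WithLp.toLp 2 fun _ : Fin (2 * d) => (1 : ℝ))
    (hXb : ∀ k : ℕ, Xb (k + 1) = fun ω =>
      Xb k ω - h • gradient (fquad d 1 L) (Xb k ω) + Real.sqrt (2 * h) • ξ (k + 1) ω)
    {ε : ℝ} (hε : 0 < ε) {k : ℕ} (hk : 1 ≤ k)
    (hW2 : W2 (P.map (Xb k)) μ ≤ ε) :
    h ≤ 4 * ε / Real.sqrt d := by
  have hhalf : h ≤ 1 / 2 := by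
    refine hh1.le.trans ?_
    rw [div_le_iff₀ (by linarith)]
    linarith
  have hμp : IsProbabilityMeasure μ := hμ.1
  -- recursion in coordinates
  have hrec : ∀ (i : Fin (2 * d)) (k : ℕ), (fun ω => Xb (k + 1) ω i) = fun ω =>
      (1 - h * (if (i : ℕ) < d then 1 else L)) * Xb k ω i + Real.sqrt (2 * h) * ξ (k + 1) ω i := by
    intro i k
    ext ω
    rw [hXb]
    simp only [PiLp.add_apply, PiLp.sub_apply, PiLp.smul_apply, smul_eq_mul, grad_fquad]
    ring
  have hXm : ∀ k, Measurable (Xb k) := by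
    intro k
    induction k with
    | zero => rw [hXb0]; exact measurable_const
    | succ k ih =>
      have : Measurable fun ω => WithLp.ofLp (Xb (k + 1) ω) := by
        rw [measurable_pi_iff]
        intro i
        rw [hrec i k]
        have := hξmeas (k + 1)
        fun_prop
      have h2 : Xb (k + 1) = fun ω => WithLp.toLp 2 (WithLp.ofLp (Xb (k + 1) ω)) := rfl
      rw [h2]
      fun_prop
  have hz : ∀ (i : Fin (2 * d)) k, MemLp (fun ω => ξ k ω i) 2 P ∧ ∫ ω, ξ k ω i ∂P = 0 ∧
      ∫ ω, ξ k ω i ^ 2 ∂P = 1 := by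
    intro i k
    have hm := hξmeas k
    have := gauss_mom (P := P) (X := fun ω => ξ k ω i) (v := 1) (by fun_prop) (by
      rw [← std_marg (2 * d) i, ← hξlaw k, Measure.map_map (by fun_prop) hm]
      rfl)
    simpa using this
  have hmom := fun i : Fin (2 * d) => scalar_mom (P := P) (x := fun k ω => Xb k ω i)
    (z := fun k ω => ξ k ω i) (by rw [hXb0]) (hrec i) (fun k => (hz i k).1)
    (fun k => (hz i k).2.1) (fun k => (hz i k).2.2) (by
      intro m n hmn
      have h1 : IndepFun (fun ω => ξ m ω i) (fun ω => ξ n ω i) P :=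
        (hindep.indepFun hmn).comp (φ := fun x : Euc (2 * d) => x i)
          (ψ := fun x : Euc (2 * d) => x i) (by fun_prop) (by fun_prop)
      rw [h1.integral_fun_mul_eq_mul_integral (hz i m).1.aestronglyMeasurable
        (hz i n).1.aestronglyMeasurable, (hz i m).2.1, zero_mul]) k
  have hgib : ∀ i : Fin (2 * d), MemLp (fun x : Euc (2 * d) => x i) 2 μ ∧ ∫ x, x i ∂μ = 0 ∧
      ((i : ℕ) < d → ∫ x, x i ^ 2 ∂μ = 1) := by
    intro i
    have := gauss_mom (P := μ) (X := fun x : Euc (2 * d) => x i) (by fun_prop)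
      (gibbs_marg hL hμ i)
    refine ⟨this.1, this.2.1, fun hi => ?_⟩
    rw [this.2.2]
    simp [hi]
  have hνp : IsProbabilityMeasure (P.map (Xb k)) :=
    Measure.isProbabilityMeasure_map (hXm k).aemeasurable
  set ν := P.map (Xb k) with hν
  have hνm : ∀ i : Fin (2 * d), MemLp (fun x : Euc (2 * d) => x i) 2 ν := fun i =>
    (memLp_map_measure_iff (by fun_prop) (hXm k).aemeasurable).2 (hmom i).1
  -- cost as an integral
  have hcost : ∀ γ : Measure (Euc (2 * d) × Euc (2 * d)), IsProbabilityMeasure γ →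
      γ.map Prod.fst = ν → γ.map Prod.snd = μ →
      (∀ i, MemLp (fun p : Euc (2 * d) × Euc (2 * d) => p.1 i) 2 γ) ∧
      (∀ i, MemLp (fun p : Euc (2 * d) × Euc (2 * d) => p.2 i) 2 γ) ∧
      ∫⁻ p, (‖p.1 - p.2‖₊ : ℝ≥0∞) ^ 2 ∂γ =
        ENNReal.ofReal (∑ i, ∫ p, (p.1 i - p.2 i) ^ 2 ∂γ) := by
    intro γ hγ h1 h2
    have m1 := fun i => (map_moments measurable_fst h1 i (hνm i)).1
    have m2 := fun i => (map_moments measurable_snd h2 i (hgib i).1).1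
    refine ⟨m1, m2, ?_⟩
    have hi : ∀ i ∈ Finset.univ, Integrable
        (fun p : Euc (2 * d) × Euc (2 * d) => (p.1 i - p.2 i) ^ 2) γ :=
      fun i _ => ((m1 i).sub (m2 i)).integrable_sq
    rw [← integral_finsetSum _ hi, ofReal_integral_eq_lintegral_ofReal (integrable_finsetSum _ hi)
      (Filter.Eventually.of_forall fun p => Finset.sum_nonneg fun i _ => sq_nonneg _)]
    refine lintegral_congr fun p => ?_
    rw [sq_nnnorm_eq]
    simp
  have hlow : ∀ γ : Measure (Euc (2 * d) × Euc (2 * d)), IsProbabilityMeasure γ →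
      γ.map Prod.fst = ν → γ.map Prod.snd = μ →
      ENNReal.ofReal (d * (h ^ 2 / 16)) ≤ ∫⁻ p, (‖p.1 - p.2‖₊ : ℝ≥0∞) ^ 2 ∂γ := by
    intro γ hγ h1 h2
    obtain ⟨m1, m2, hc⟩ := hcost γ hγ h1 h2
    rw [hc]
    refine ENNReal.ofReal_le_ofReal ?_
    have hs : ∑ i : Fin (2 * d), (if (i : ℕ) < d then h ^ 2 / 16 else 0) = d * (h ^ 2 / 16) := by
      rw [← Finset.sum_filter, Finset.sum_const, fin_card, nsmul_eq_mul]
    rw [← hs]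
    refine Finset.sum_le_sum fun i _ => ?_
    split_ifs with hi
    · obtain ⟨_, a1, a2⟩ := map_moments measurable_fst h1 i (hνm i)
      obtain ⟨_, b1, b2⟩ := map_moments measurable_snd h2 i (hgib i).1
      obtain ⟨_, c1, c2⟩ := map_moments (hXm k) hν.symm i (hνm i)
      obtain ⟨_, d1, _, d2⟩ := hmom i
      simp only [hi, if_true, mul_one] at d1 d2
      refine scalar_lower (a := (1 - h) ^ k) (m1 i) (m2 i) hh0 hhalf
        (pow_nonneg (by linarith) _) ?_ ?_ ?_ ?_
      · rw [a1, ← c1, d1]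
      · rw [a2, ← c2, d2, Real.sq_sqrt (by positivity)]
      · rw [b1, (hgib i).2.1]
      · rw [b2, (hgib i).2.2 hi]
    · exact integral_nonneg fun p => sq_nonneg _
  -- conclude
  unfold W2 at hW2
  set I := ⨅ γ ∈ {γ : Measure (Euc (2 * d) × Euc (2 * d)) |
        IsProbabilityMeasure γ ∧ γ.map Prod.fst = ν ∧ γ.map Prod.snd = μ},
      ∫⁻ p, (‖p.1 - p.2‖₊ : ℝ≥0∞) ^ 2 ∂γ with hI
  have hIlow : ENNReal.ofReal (d * (h ^ 2 / 16)) ≤ I :=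
    le_iInf₂ fun γ hγ => hlow γ hγ.1 hγ.2.1 hγ.2.2
  have hItop : I ≠ ⊤ := by
    have hpr : IsProbabilityMeasure (ν.prod μ) ∧ (ν.prod μ).map Prod.fst = ν ∧
        (ν.prod μ).map Prod.snd = μ := by
      refine ⟨inferInstance, ?_, ?_⟩
      · rw [Measure.map_fst_prod]; simp
      · rw [Measure.map_snd_prod]; simp
    have hle : I ≤ ∫⁻ p, (‖p.1 - p.2‖₊ : ℝ≥0∞) ^ 2 ∂(ν.prod μ) := iInf₂_le (ν.prod μ) hpr
    rw [(hcost _ hpr.1 hpr.2.1 hpr.2.2).2.2] at hle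
    exact ne_top_of_le_ne_top ENNReal.ofReal_ne_top hle
  have hr : d * (h ^ 2 / 16) ≤ I.toReal := (ENNReal.ofReal_le_iff_le_toReal hItop).1 hIlow
  have hI2 : I.toReal ≤ ε ^ 2 := (Real.sqrt_le_left hε.le).1 hW2
  have hdp : (0 : ℝ) < d := by exact_mod_cast hd
  rw [le_div_iff₀ (Real.sqrt_pos.2 hdp)]
  refine le_of_sq_le_sq ?_ (by positivity)
  rw [mul_pow, Real.sq_sqrt hdp.le]
  nlinarith

end
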